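/- arXiv:1908.04375 — 4 statements merged into one kernel-verified Lean document; each statement's English description precedes it below -/
import Mathlib

section
/- Let κ be a regular uncountable cardinal, λ ≥ κ, σ an infinite cardinal, and J a κ-complete fine ideal on P_κ(λ). Suppose that J^+ →_J (J^+, σ^+)² holds. Then J is disjointly (σ, λ^{<κ})-distributive. -/
/-!
Fix a positive set `A` and maximal disjoint families `Q i` for `i < σ`. Index the members of the
`Q i` by ordinals, and attach to each `a` the `σ`-sequence `g a` whose `i`-th entry is the index of
the member of `Q i` containing `a`. Colour `(a, b)` by `1` when `g b` is lexicographically below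
`g a`. A sequence of length `σ⁺` whose pairs all have colour `1` would be a lexicographically
decreasing `σ⁺`-sequence of `σ`-sequences of ordinals, which does not exist (`no_lex_decreasing`).

So the partition relation gives a positive `B ⊆ A` such that for every `a ∈ B`, `g b` is not
lexicographically below `g a` for `J`-almost all `b ∈ B`. The pieces `h i` are found by recursion
on `i`: by `κ`-completeness almost all of `B` lies in every `h j` with `j < i`, and among these
points two members of `Q i` cannot both be positive, since a point `a` of the one with the larger
index would have `g b` lexicographically below `g a` for positively many `b`. By maximality of
`Q i` exactly one piece is positive, and it contains almost all of `B`.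

The completeness step needs `σ < κ`, which the partition relation itself forces (`lt_of_arrow`).
-/

set_option autoImplicit false

noncomputable section

open Cardinal Set

universe u

/-- `P_κ(λ)`: the collection of subsets of (the set of ordinals below) `λ`
of cardinality `< κ`. -/
def Pkl (κ lam : Cardinal.{0}) : Set (Set Ordinal.{0}) :=
  {a | a ⊆ Set.Iio lam.ord ∧ #a < Cardinal.lift.{1} κ}

/-- `J` is an ideal on the set `X`. -/
structure IsIdealOn {α : Type u} (J : Set (Set α)) (X : Set α) : Prop where
  empty_mem : ∅ ∈ J
  subset_ground : ∀ A ∈ J, A ⊆ X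
  union_mem : ∀ A ∈ J, ∀ B ∈ J, A ∪ B ∈ J
  mem_of_subset : ∀ A ∈ J, ∀ B, B ⊆ A → B ∈ J
  ground_not_mem : X ∉ J

/-- `J⁺`: the `J`-positive subsets of the ground set `X`. -/
def plusOf {α : Type u} (J : Set (Set α)) (X : Set α) : Set (Set α) :=
  {A | A ⊆ X ∧ A ∉ J}

/-- The restriction `J | A` of an ideal `J` with ground set `X`. -/
def restr {α : Type u} (J : Set (Set α)) (X A : Set α) : Set (Set α) :=
  {B | B ⊆ X ∧ B ∩ A ∈ J}

/-- The ideal `I_{κ,λ}` of noncofinal subsets of `P_κ(λ)`. -/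
def Ikl (κ lam : Cardinal.{0}) : Set (Set (Set Ordinal.{0})) :=
  {B | B ⊆ Pkl κ lam ∧ ∃ a ∈ Pkl κ lam, ∀ b ∈ B, ¬a ⊆ b}

/-- `Q` is a partition of `X`. -/
def IsPartitionOf {α : Type u} (Q : Set (Set α)) (X : Set α) : Prop :=
  (∀ A ∈ Q, A.Nonempty) ∧ (∀ A ∈ Q, A ⊆ X) ∧
    (∀ A ∈ Q, ∀ B ∈ Q, A ≠ B → A ∩ B = ∅) ∧ ⋃₀ Q = X

/-- The piece selection principle `PS⁺(τ, κ, λ)`. -/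
def PSPlus (τ κ lam : Cardinal.{0}) : Prop :=
  ∀ Q : Set Ordinal.{0} → Set (Set (Set Ordinal.{0})),
    (∀ a ∈ Pkl κ lam, IsPartitionOf (Q a) (Pkl κ lam) ∧ #(Q a) < Cardinal.lift.{1} τ) →
    ∃ B ∈ plusOf (Ikl κ lam) (Pkl κ lam), ∃ h : Set Ordinal.{0} → Set (Set Ordinal.{0}),
      (∀ a ∈ Pkl κ lam, h a ∈ Q a) ∧
      ∀ a ∈ B, ∀ b ∈ B, ∃ c, c ∈ h a ∧ c ∈ h b ∧ a ∪ b ⊆ c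

/-- The piece selection principle `PS⋆(τ, κ, λ)`. -/
def PSStar (τ κ lam : Cardinal.{0}) : Prop :=
  ∀ Q : Set Ordinal.{0} → Set (Set (Set Ordinal.{0})),
    (∀ a ∈ Pkl κ lam, IsPartitionOf (Q a) (Pkl κ lam) ∧ #(Q a) < Cardinal.lift.{1} τ) →
    ∃ B ∈ plusOf (Ikl κ lam) (Pkl κ lam), ∃ h : Set Ordinal.{0} → Set (Set Ordinal.{0}),
      (∀ a ∈ Pkl κ lam, h a ∈ Q a) ∧
      ∀ a ∈ B, ∀ b ∈ B, ∃ t ∈ B, a ∪ b ⊆ t ∧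
        (∃ c, c ∈ h a ∧ c ∈ h t ∧ t ⊆ c) ∧ ∃ d, d ∈ h b ∧ d ∈ h t ∧ t ⊆ d

/-- The piece selection principle `PS(τ, κ, λ)`. -/
def PSpr (τ κ lam : Cardinal.{0}) : Prop :=
  ∀ Q : Set Ordinal.{0} → Set (Set (Set Ordinal.{0})),
    (∀ a ∈ Pkl κ lam, IsPartitionOf (Q a) (Pkl κ lam) ∧ #(Q a) < Cardinal.lift.{1} τ) →
    ∃ B ∈ plusOf (Ikl κ lam) (Pkl κ lam), ∃ h : Set Ordinal.{0} → Set (Set Ordinal.{0}),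
      (∀ a ∈ Pkl κ lam, h a ∈ Q a) ∧
      ∀ a ∈ B, ∀ b ∈ B, ∃ t ∈ Pkl κ lam, a ∪ b ⊆ t ∧
        (∃ c, c ∈ h a ∧ c ∈ h t ∧ t ⊆ c) ∧ ∃ d, d ∈ h b ∧ d ∈ h t ∧ t ⊆ d

/-- The one-cardinal piece selection principle `PS⁺(τ, μ)`. -/
def PSPlusOne (τ μ : Cardinal.{0}) : Prop :=
  ∀ Q : Ordinal.{0} → Set (Set Ordinal.{0}),
    (∀ β < μ.ord, IsPartitionOf (Q β) (Set.Ico β μ.ord) ∧ #(Q β) < Cardinal.lift.{1} τ) →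
    ∃ B : Set Ordinal.{0}, B ⊆ Set.Iio μ.ord ∧ (∀ γ < μ.ord, ∃ β ∈ B, γ ≤ β) ∧
      ∃ h : Ordinal.{0} → Set Ordinal.{0}, (∀ β ∈ B, h β ∈ Q β) ∧
        ∀ α ∈ B, ∀ β ∈ B, (h α ∩ h β).Nonempty

/-- `X` is closed below `δ`: every ordinal `< δ` which is a limit of elements
of `X` belongs to `X`. -/
def IsClosedBelow (X : Set Ordinal.{0}) (δ : Ordinal.{0}) : Prop :=
  ∀ β < δ, 0 < β → (∀ γ < β, ∃ ξ ∈ X, γ < ξ ∧ ξ < β) → β ∈ X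

/-- `X` is a closed unbounded subset of `δ`. -/
def IsClubBelow (X : Set Ordinal.{0}) (δ : Ordinal.{0}) : Prop :=
  X ⊆ Set.Iio δ ∧ (∀ γ < δ, ∃ ξ ∈ X, γ ≤ ξ) ∧ IsClosedBelow X δ

/-- `δ` is a remarkably good point for the sequence `f` with respect to the
set of regular cardinals `A` and the ideal `I` on `A`. -/
def RemGoodPoint (A : Set Cardinal.{0}) (I : Set (Set Cardinal.{0}))
    (f : Ordinal.{0} → Cardinal.{0} → Ordinal.{0}) (δ : Ordinal.{0}) : Prop :=
  ∃ X : Set Ordinal.{0}, IsClubBelow X δ ∧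
    ∃ Z : Ordinal.{0} → Set Cardinal.{0}, (∀ ξ ∈ X, Z ξ ∈ I) ∧
      ∀ β ∈ X, ∀ ξ ∈ X, β < ξ → ∀ a ∈ A, a ∉ Z β → a ∉ Z ξ → f β a < f ξ a

/-- `sup (a ∩ κ)`. -/
def supk (κ : Cardinal.{0}) (a : Set Ordinal.{0}) : Ordinal.{0} :=
  sSup (a ∩ Set.Iio κ.ord)

/-- Shelah's covering number `cov(ρ₁, ρ₂, ρ₃, ρ₄)`. -/
def covNum (ρ₁ ρ₂ ρ₃ ρ₄ : Cardinal.{0}) : Cardinal.{1} :=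
  sInf {c : Cardinal.{1} | ∃ X : Set (Set Ordinal.{0}), c = #X ∧
    (∀ y ∈ X, y ⊆ Set.Iio ρ₁.ord ∧ #y < Cardinal.lift.{1} ρ₂) ∧
    ∀ a : Set Ordinal.{0}, a ⊆ Set.Iio ρ₁.ord → #a < Cardinal.lift.{1} ρ₃ →
      ∃ Q, Q ⊆ X ∧ #Q < Cardinal.lift.{1} ρ₄ ∧ a ⊆ ⋃₀ Q}

/-- `κ` is mildly `λ`-ineffable. -/
def MildlyIneffable (κ lam : Cardinal.{0}) : Prop :=
  ∀ s : Set Ordinal.{0} → Set Ordinal.{0}, (∀ a ∈ Pkl κ lam, s a ⊆ a) →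
    ∃ S : Set Ordinal.{0}, S ⊆ Set.Iio lam.ord ∧
      ∀ b ∈ Pkl κ lam, ∃ a ∈ Pkl κ lam, b ⊆ a ∧ S ∩ b = s a ∩ b

/-- `Q` is a maximal `J`-almost disjoint family of `J`-positive sets. -/
def MADOn {α : Type u} (J : Set (Set α)) (X : Set α) (Q : Set (Set α)) : Prop :=
  Q ⊆ plusOf J X ∧ (∀ A ∈ Q, ∀ B ∈ Q, A ≠ B → A ∩ B ∈ J) ∧
    ∀ C ∈ plusOf J X, ∃ A ∈ Q, A ∩ C ∉ J

/-- `Q` is a maximal disjoint family of `J`-positive sets. -/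
def MADdOn {α : Type u} (J : Set (Set α)) (X : Set α) (Q : Set (Set α)) : Prop :=
  Q ⊆ plusOf J X ∧ (∀ A ∈ Q, ∀ B ∈ Q, A ≠ B → A ∩ B = ∅) ∧
    ∀ C ∈ plusOf J X, ∃ A ∈ Q, A ∩ C ∉ J

/-- `(ρ, ν)`-distributivity of an ideal `J` on `P_κ(λ)`. -/
def DistrPkl (κ lam : Cardinal.{0}) (J : Set (Set (Set Ordinal.{0})))
    (ρ ν : Cardinal.{0}) : Prop :=
  ∀ A ∈ plusOf J (Pkl κ lam), ∀ Q : Ordinal.{0} → Set (Set (Set Ordinal.{0})),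
    (∀ i, i < ρ.ord → MADOn J (Pkl κ lam) (Q i) ∧ #(Q i) ≤ Cardinal.lift.{1} ν) →
    ∃ B ∈ plusOf J (Pkl κ lam), B ⊆ A ∧
      ∃ h : Ordinal.{0} → Set (Set Ordinal.{0}),
        (∀ i, i < ρ.ord → h i ∈ Q i) ∧ ∀ i, i < ρ.ord → B \ h i ∈ J

/-- Disjoint `(ρ, ν)`-distributivity of an ideal `J` on `P_κ(λ)`. -/
def DisjDistrPkl (κ lam : Cardinal.{0}) (J : Set (Set (Set Ordinal.{0})))
    (ρ ν : Cardinal.{0}) : Prop :=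
  ∀ A ∈ plusOf J (Pkl κ lam), ∀ Q : Ordinal.{0} → Set (Set (Set Ordinal.{0})),
    (∀ i, i < ρ.ord → MADdOn J (Pkl κ lam) (Q i) ∧ #(Q i) ≤ Cardinal.lift.{1} ν) →
    ∃ B ∈ plusOf J (Pkl κ lam), B ⊆ A ∧
      ∃ h : Ordinal.{0} → Set (Set Ordinal.{0}),
        (∀ i, i < ρ.ord → h i ∈ Q i) ∧ ∀ i, i < ρ.ord → B \ h i ∈ J

/-- Generic `(ρ, ν)`-distributivity of an ideal `J` on a set `X`. -/
def DistrU {α : Type u} (J : Set (Set α)) (X : Set α) (ρ ν : Cardinal.{u}) : Prop :=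
  ∀ A ∈ plusOf J X, ∀ Q : Ordinal.{u} → Set (Set α),
    (∀ i, i < ρ.ord → MADOn J X (Q i) ∧ #(Q i) ≤ ν) →
    ∃ B ∈ plusOf J X, B ⊆ A ∧
      ∃ h : Ordinal.{u} → Set α,
        (∀ i, i < ρ.ord → h i ∈ Q i) ∧ ∀ i, i < ρ.ord → B \ h i ∈ J

/-- `J` is `κ`-complete. -/
def KappaComplete (κ : Cardinal.{0}) (J : Set (Set (Set Ordinal.{0}))) : Prop :=
  ∀ Z : Set (Set (Set Ordinal.{0})), Z ⊆ J → #Z < Cardinal.lift.{1} κ → ⋃₀ Z ∈ J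

/-- `J⁺ → (J⁺, ρ)²` relative to `J` (unbalanced partition relation on pairs
from `P_κ(λ)`). -/
def ArrowPairOrd (κ lam : Cardinal.{0}) (J : Set (Set (Set Ordinal.{0})))
    (ρ : Cardinal.{0}) : Prop :=
  ∀ F : Set Ordinal.{0} → Set Ordinal.{0} → Fin 2, ∀ A ∈ plusOf J (Pkl κ lam),
    (∃ B ∈ plusOf J (Pkl κ lam), B ⊆ A ∧ ∀ a ∈ B, {b | b ∈ B ∧ F a b ≠ 0} ∈ J) ∨
    (∃ c : Ordinal.{0} → Set Ordinal.{0}, (∀ i, i < ρ.ord → c i ∈ A) ∧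
      (∀ i j, i < j → j < ρ.ord → c i ⊂ c j) ∧
      ∀ i j, i < j → j < ρ.ord → F (c i) (c j) = 1)

/-- `X →_κ^J (J⁺, ρ)²` (unbalanced partition relation on `κ × P_κ(λ)`). -/
def ArrowKappaPair (κ lam : Cardinal.{0}) (J : Set (Set (Set Ordinal.{0})))
    (X : Set (Set (Set Ordinal.{0}))) (ρ : Cardinal.{0}) : Prop :=
  ∀ F : Ordinal.{0} → Set Ordinal.{0} → Fin 2, ∀ A ∈ X,
    (∃ B ∈ plusOf J (Pkl κ lam), B ⊆ A ∧
      ∀ a ∈ B, {b | b ∈ B ∧ F (supk κ a) b ≠ 0} ∈ J) ∨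
    (∃ c : Ordinal.{0} → Set Ordinal.{0}, (∀ i, i < ρ.ord → c i ∈ A) ∧
      (∀ i j, i < j → j < ρ.ord → c i ⊂ c j) ∧
      ∀ i j, i < j → j < ρ.ord → F (supk κ (c i)) (c j) = 1)

/-- `{P_κ(λ)} →_J (J⁺)²_ρ` (balanced partition relation with `ρ` colors). -/
def BalArrowAll (κ lam : Cardinal.{0}) (J : Set (Set (Set Ordinal.{0})))
    (ρ : Cardinal.{0}) : Prop :=
  ∀ F : Set Ordinal.{0} → Set Ordinal.{0} → Ordinal.{0}, (∀ a b, F a b < ρ.ord) →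
    ∃ i, i < ρ.ord ∧ ∃ B ∈ plusOf J (Pkl κ lam),
      ∃ Z : Set Ordinal.{0} → Set (Set Ordinal.{0}), (∀ a ∈ B, Z a ∈ J) ∧
        ∀ a ∈ B, ∀ b ∈ B, b ∉ Z a → F a b = i

/-- `J⁺ →_J (J⁺)²_ω` (balanced partition relation with `ω` colors). -/
def ArrowOmegaColors (κ lam : Cardinal.{0}) (J : Set (Set (Set Ordinal.{0}))) : Prop :=
  ∀ F : Set Ordinal.{0} → Set Ordinal.{0} → ℕ, ∀ A ∈ plusOf J (Pkl κ lam),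
    ∃ i : ℕ, ∃ B ∈ plusOf J (Pkl κ lam), B ⊆ A ∧
      ∃ Z : Set Ordinal.{0} → Set (Set Ordinal.{0}), (∀ a ∈ B, Z a ∈ J) ∧
        ∀ a ∈ B, ∀ b ∈ B, b ∉ Z a → F a b = i

/-- `J⁺ →_J (J⁺)ⁿ_ρ` (balanced partition relation on `n`-tuples with `ρ` colors). -/
def ArrowN (κ lam : Cardinal.{0}) (J : Set (Set (Set Ordinal.{0}))) (n : ℕ)
    (ρ : Cardinal.{0}) : Prop :=
  ∀ F : (Fin n → Set Ordinal.{0}) → Ordinal.{0}, (∀ s, F s < ρ.ord) →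
    ∀ A ∈ plusOf J (Pkl κ lam),
      ∃ i, i < ρ.ord ∧ ∃ B ∈ plusOf J (Pkl κ lam), B ⊆ A ∧
        ∃ Z : Set Ordinal.{0} → Set (Set Ordinal.{0}), (∀ a ∈ B, Z a ∈ J) ∧
          ∀ s : Fin n → Set Ordinal.{0}, (∀ m, s m ∈ B) →
            (∀ m k : Fin n, k < m → s m ∉ Z (s k)) → F s = i

/-- The projected ideal `J ↾ κ` on `κ`. -/
def restrK (κ lam : Cardinal.{0}) (J : Set (Set (Set Ordinal.{0}))) :
    Set (Set Ordinal.{0}) :=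
  {X | X ⊆ Set.Iio κ.ord ∧ {a | a ∈ Pkl κ lam ∧ supk κ a ∈ X} ∈ J}

/-- `J` is a weak `π`-point. -/
def WeakPiPoint (κ lam : Cardinal.{0}) (J : Set (Set (Set Ordinal.{0}))) : Prop :=
  ∀ A ∈ plusOf J (Pkl κ lam), ∀ f : Ordinal.{0} → Set (Set Ordinal.{0}),
    (∀ α, α < κ.ord → f α ∈ J) →
    ∃ B ∈ plusOf J (Pkl κ lam), B ⊆ A ∧ ∀ α, α < κ.ord → B ∩ f α ∈ Ikl κ lam

/-- `J` is a weak `χ`-point. -/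
def WeakChiPoint (κ lam : Cardinal.{0}) (J : Set (Set (Set Ordinal.{0}))) : Prop :=
  ∀ A ∈ plusOf J (Pkl κ lam), ∀ g : Ordinal.{0} → Set Ordinal.{0},
    (∀ α, α < κ.ord → g α ∈ Pkl κ lam) →
    ∃ B ∈ plusOf J (Pkl κ lam), B ⊆ A ∧
      ∀ a ∈ B, ∀ b ∈ B, supk κ a < supk κ b → g (supk κ a) ⊆ b

/-- `C` is a closed unbounded subset of `P_κ(λ)`. -/
def IsClubPkl (κ lam : Cardinal.{0}) (C : Set (Set Ordinal.{0})) : Prop :=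
  C ⊆ Pkl κ lam ∧ (∀ a ∈ Pkl κ lam, ∃ b ∈ C, a ⊆ b) ∧
    ∀ β : Ordinal.{0}, 0 < β → β < κ.ord →
      ∀ f : Ordinal.{0} → Set Ordinal.{0},
        (∀ i, i < β → f i ∈ C) → (∀ i j, i ≤ j → j < β → f i ⊆ f j) →
        (⋃ i ∈ Set.Iio β, f i) ∈ C

/-- The set `S^λ_{κ,λ} = {a ∈ P_κ(λ) : |a| = |a ∩ κ|}`. -/
def Slamset (κ lam : Cardinal.{0}) : Set (Set Ordinal.{0}) :=
  {a | a ∈ Pkl κ lam ∧ #a = #((a ∩ Set.Iio κ.ord : Set Ordinal.{0}))}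

/-- The ideal `I_κ` of bounded subsets of `κ`. -/
def Ibd (κ : Cardinal.{0}) : Set (Set Ordinal.{0}) :=
  {X | X ⊆ Set.Iio κ.ord ∧ ∃ α, α < κ.ord ∧ X ⊆ Set.Iio α}

/-- The ideal extension principle `IE(τ, κ, I_κ)`. -/
def IEkappa (τ κ : Cardinal.{0}) : Prop :=
  ∀ Q : Ordinal.{0} → Set (Set Ordinal.{0}),
    (∀ α < κ.ord, IsPartitionOf (Q α) (Set.Ico α κ.ord) ∧ #(Q α) < Cardinal.lift.{1} τ) →
    ∃ h : Ordinal.{0} → Set Ordinal.{0}, (∀ α < κ.ord, h α ∈ Q α) ∧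
      ∃ K : Set (Set Ordinal.{0}), IsIdealOn K (Set.Iio κ.ord) ∧ Ibd κ ⊆ K ∧
        ∀ α < κ.ord, Set.Iio κ.ord \ h α ∈ K

/-- The transversal property `PT(κ, τ)`. -/
def PT (κ τ : Cardinal.{0}) : Prop :=
  ∀ X : Ordinal.{0} → Set Ordinal.{0},
    (∀ α, α < κ.ord → #(X α) < Cardinal.lift.{1} τ) →
    (¬∃ g : Ordinal.{0} → Ordinal.{0}, (∀ α, α < κ.ord → g α ∈ X α) ∧
        Set.InjOn g (Set.Iio κ.ord)) →
    ∃ b : Set Ordinal.{0}, b ⊆ Set.Iio κ.ord ∧ #b < Cardinal.lift.{1} κ ∧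
      ¬∃ g : Ordinal.{0} → Ordinal.{0}, (∀ α ∈ b, g α ∈ X α) ∧ Set.InjOn g b

/-- `(T, lt)` is a tree whose height function is `ht` : the predecessors of
any node `t` are well-ordered by `lt`, in order type `ht t`. -/
def IsTreeWithHeight (T : Type) (lt : T → T → Prop) (ht : T → Ordinal.{0}) : Prop :=
  (∀ t, ¬lt t t) ∧ (∀ r s t, lt r s → lt s t → lt r t) ∧
    (∀ s t, lt s t → ht s < ht t) ∧
    (∀ t, ∀ α, α < ht t → ∃ s, lt s t ∧ ht s = α) ∧
    (∀ s₁ s₂ t, lt s₁ t → lt s₂ t → ht s₁ = ht s₂ → s₁ = s₂) ∧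
    (∀ s₁ s₂ t, lt s₁ t → lt s₂ t → ht s₁ < ht s₂ → lt s₁ s₂)

/-- The tree property `TP(κ)` : every tree of height `κ` whose levels have
size `< κ` has a `κ`-branch. -/
def TP (κ : Cardinal.{0}) : Prop :=
  ∀ (T : Type) (lt : T → T → Prop) (ht : T → Ordinal.{0}),
    IsTreeWithHeight T lt ht →
    (∀ t, ht t < κ.ord) →
    (∀ α < κ.ord, ∃ t, ht t = α) →
    (∀ α : Ordinal.{0}, #{t : T // ht t = α} < κ) →
    ∃ B : Set T, (∀ s ∈ B, ∀ t ∈ B, s ≠ t → lt s t ∨ lt t s) ∧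
      ∀ α < κ.ord, ∃ t ∈ B, ht t = α


/-- `f` is lexicographically below `g` on the index set `σ`, witnessed by the first coordinate
below `σ` at which they differ. -/
def LexLT (σ : Cardinal.{0}) (f g : Ordinal.{0} → Ordinal.{1}) : Prop :=
  ∃ i < σ.ord, (∀ j < i, f j = g j) ∧ f i < g i

/-- Regularity of `σ⁺`: at most `σ` many ordinals below `σ⁺` are bounded below `σ⁺`. -/
lemma exists_bound_succ {σ : Cardinal.{0}} (hσ : ℵ₀ ≤ σ) {β : Ordinal.{0}} (hβ : β ≤ σ.ord)
    (d : Ordinal.{0} → Ordinal.{0}) (hd : ∀ γ < β, d γ < (Order.succ σ).ord) :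
    ∃ δ < (Order.succ σ).ord, ∀ γ < β, d γ ≤ δ := by
  have hcard : #(Iio β) ≤ Cardinal.lift.{1} σ := by
    rw [Cardinal.mk_Iio_ordinal, Cardinal.lift_le]
    simpa using Ordinal.card_le_card hβ
  have hsmall : Small.{0} (Iio β) := inferInstance
  refine ⟨⨆ γ : Iio β, d γ, ?_, fun γ hγ => ?_⟩
  · apply Ordinal.lift_iSup_lt_of_lt_cof
    · rw [← Ordinal.lift_cof, (isRegular_succ hσ).cof_ord]
      refine (Cardinal.lift_le.2 hcard).trans_lt ?_
      simp
    · rintro ⟨γ, hγ⟩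
      exact hd γ hγ
  · exact Ordinal.le_iSup (fun γ : Iio β => d γ) ⟨γ, hγ⟩

/-- There is no lexicographically decreasing `σ⁺`-sequence of `σ`-sequences of ordinals: by
induction on `β < σ`, the `β`-th coordinate is eventually non-increasing, hence eventually
constant; regularity of `σ⁺` makes all coordinates constant from a common point on. -/
lemma no_lex_decreasing {σ : Cardinal.{0}} (hσ : ℵ₀ ≤ σ)
    (g : Ordinal.{0} → Ordinal.{0} → Ordinal.{1})
    (hg : ∀ i j, i < j → j < (Order.succ σ).ord → LexLT σ (g j) (g i)) : False := by
  have key : ∀ β, β < σ.ord → ∃ δ < (Order.succ σ).ord,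
      ∀ i, δ ≤ i → i < (Order.succ σ).ord → g i β = g δ β := by
    intro β
    induction β using WellFoundedLT.induction with
    | ind β ih =>
      intro hβ
      have ih' : ∀ γ, ∃ δ, γ < β → δ < (Order.succ σ).ord ∧
          ∀ i, δ ≤ i → i < (Order.succ σ).ord → g i γ = g δ γ := by
        intro γ
        by_cases hγ : γ < β
        · obtain ⟨δ, h1, h2⟩ := ih γ hγ (hγ.trans hβ)
          exact ⟨δ, fun _ => ⟨h1, h2⟩⟩
        · exact ⟨0, fun h => absurd h hγ⟩
      choose d hd using ih'
      obtain ⟨δ, hδ, hbd⟩ := exists_bound_succ hσ hβ.le d (fun γ hγ => (hd γ hγ).1)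
      -- the coordinates before `β` are constant from `δ` on, so the `β`-th is non-increasing there
      have hmono : ∀ i j, δ ≤ i → i ≤ j → j < (Order.succ σ).ord → g j β ≤ g i β := by
        intro i j hi hij hj
        rcases hij.eq_or_lt with rfl | hij
        · exact le_rfl
        obtain ⟨k, -, hk1, hk2⟩ := hg i j hij hj
        rcases lt_trichotomy k β with hk | rfl | hk
        · have e1 := (hd k hk).2 i ((hbd k hk).trans hi) (hij.trans hj)
          have e2 := (hd k hk).2 j ((hbd k hk).trans (hi.trans hij.le)) hj
          rw [e1, e2] at hk2
          exact absurd hk2 (lt_irrefl _)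
        · exact hk2.le
        · exact (hk1 β hk).le
      -- a point of `[δ, σ⁺)` where the `β`-th coordinate is least
      obtain ⟨ε, ⟨hε1, hε2⟩, hmin⟩ := (InvImage.wf (fun i => g i β)
        (wellFounded_lt (α := Ordinal.{1}))).has_min (Set.Ico δ (Order.succ σ).ord) ⟨δ, le_rfl, hδ⟩
      refine ⟨ε, hε2, fun i hi hi2 => le_antisymm (hmono ε i hε1 hi hi2) ?_⟩
      exact not_lt.1 (hmin i ⟨hε1.trans hi, hi2⟩)
  have key' : ∀ β, ∃ δ, β < σ.ord → δ < (Order.succ σ).ord ∧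
      ∀ i, δ ≤ i → i < (Order.succ σ).ord → g i β = g δ β := by
    intro β
    by_cases hβ : β < σ.ord
    · obtain ⟨δ, h1, h2⟩ := key β hβ
      exact ⟨δ, fun _ => ⟨h1, h2⟩⟩
    · exact ⟨0, fun h => absurd h hβ⟩
  choose d hd using key'
  obtain ⟨δ, hδ, hbd⟩ := exists_bound_succ hσ le_rfl d (fun γ hγ => (hd γ hγ).1)
  have hs : Order.succ δ < (Order.succ σ).ord :=
    (Cardinal.isSuccLimit_ord (hσ.trans (Order.le_succ σ))).succ_lt hδ
  obtain ⟨k, hkσ, -, hk2⟩ := hg δ (Order.succ δ) (Order.lt_succ δ) hs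
  have e1 := (hd k hkσ).2 δ (hbd k hkσ) hδ
  have e2 := (hd k hkσ).2 _ ((hbd k hkσ).trans (Order.le_succ δ)) hs
  rw [e1, e2] at hk2
  exact lt_irrefl _ hk2

/-- The partition relation forces `σ < κ`: colouring every pair by `1` leaves only the second
alternative, and the `κ`-th term of a strictly increasing sequence of length `> κ` has at least
`κ` elements. -/
lemma lt_of_arrow {κ lam σ : Cardinal.{0}} (hκ : ℵ₀ ≤ κ)
    {J : Set (Set (Set Ordinal.{0}))} (hJ : IsIdealOn J (Pkl κ lam))
    (harrow : ArrowPairOrd κ lam J (Order.succ σ)) : σ < κ := by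
  by_contra hlt
  have hκσ : κ.ord < (Order.succ σ).ord :=
    Cardinal.ord_lt_ord.2 (Order.lt_succ_of_le (not_lt.1 hlt))
  rcases harrow (fun _ _ => 1) (Pkl κ lam) ⟨subset_rfl, hJ.ground_not_mem⟩ with
    ⟨B, ⟨-, hB⟩, -, hB2⟩ | ⟨c, hc, hinc, -⟩
  · obtain ⟨a, ha⟩ : B.Nonempty :=
      Set.nonempty_iff_ne_empty.2 (fun h => hB (h ▸ hJ.empty_mem))
    exact hB (by simpa using hB2 a ha)
  · have hsucc : ∀ i, i < κ.ord → Order.succ i < κ.ord := fun i hi =>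
      (Cardinal.isSuccLimit_ord hκ).succ_lt hi
    have hx : ∀ i : Iio κ.ord, ∃ x, x ∈ c (Order.succ i.1) ∧ x ∉ c i.1 := fun i =>
      Set.exists_of_ssubset
        (hinc i.1 _ (Order.lt_succ i.1) ((hsucc i.1 i.2).trans hκσ))
    choose x hx1 hx2 using hx
    have hsub : ∀ i j, i ≤ j → j ≤ κ.ord → c i ⊆ c j := by
      intro i j hij hj
      rcases hij.eq_or_lt with rfl | hij
      · exact subset_rfl
      · exact (hinc i j hij (hj.trans_lt hκσ)).subset
    have hne : ∀ i j : Iio κ.ord, i < j → x i ≠ x j := by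
      intro i j hij h
      exact hx2 j (h ▸ hsub _ _ (Order.succ_le_of_lt hij) (le_of_lt j.2) (hx1 i))
    have hinj : Function.Injective
        (fun i : Iio κ.ord => (⟨x i, hsub _ _ (hsucc i.1 i.2).le le_rfl (hx1 i)⟩ : c κ.ord)) := by
      intro i j h
      have h' : x i = x j := congrArg Subtype.val h
      rcases lt_trichotomy i j with hij | hij | hij
      · exact absurd h' (hne i j hij)
      · exact hij
      · exact absurd h'.symm (hne j i hij)
    have hle := Cardinal.mk_le_of_injective hinj
    rw [Cardinal.mk_Iio_ordinal, Cardinal.card_ord] at hle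
    exact absurd (hc κ.ord hκσ).2 (not_lt.2 hle)

lemma iUnion_Iio_mem {κ : Cardinal.{0}} {J : Set (Set (Set Ordinal.{0}))}
    (hcomp : KappaComplete κ J) {i : Ordinal.{0}} (hi : i < κ.ord)
    (X : Ordinal.{0} → Set (Set Ordinal.{0})) (hX : ∀ j < i, X j ∈ J) :
    (⋃ j ∈ Iio i, X j) ∈ J := by
  rw [← Set.sUnion_image]
  refine hcomp _ ?_ ?_
  · rintro _ ⟨j, hj, rfl⟩
    exact hX j hj
  · refine Cardinal.mk_image_le.trans_lt ?_
    rw [Cardinal.mk_Iio_ordinal, Cardinal.lift_lt]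
    exact Cardinal.lt_ord.1 hi

/-- if `J` is a `κ`-complete fine ideal on `P_κ(λ)` and
`J⁺ →_J (J⁺, σ⁺)²` holds, then `J` is disjointly `(σ, λ^{<κ})`-distributive. -/
theorem stmt13 (κ lam σ : Cardinal.{0}) (hreg : κ.IsRegular) (hunc : ℵ₀ < κ)
    (hkl : κ ≤ lam) (hσ : ℵ₀ ≤ σ)
    (J : Set (Set (Set Ordinal.{0}))) (hJ : IsIdealOn J (Pkl κ lam))
    (hcomp : KappaComplete κ J) (hfine : Ikl κ lam ⊆ J)
    (harrow : ArrowPairOrd κ lam J (Order.succ σ)) :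
    DisjDistrPkl κ lam J σ (Cardinal.powerlt lam κ) := by
  classical
  intro A hA Q hQ
  have hσκ : σ < κ := lt_of_arrow hunc.le hJ harrow
  -- an indexing of all families of sets of ordinals by ordinals
  obtain ⟨r, hr⟩ : ∃ r : Set (Set Ordinal.{0}) → Ordinal.{1}, Function.Injective r :=
    ⟨Ordinal.typein WellOrderingRel, Ordinal.typein_injective _⟩
  -- `g a i` is the index of the member of `Q i` that contains `a`, and `0` if there is none
  let g : Set Ordinal.{0} → Ordinal.{0} → Ordinal.{1} := fun a i =>
    if h : ∃ q ∈ Q i, a ∈ q then r h.choose else 0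
  have hg : ∀ i, i < σ.ord → ∀ q ∈ Q i, ∀ a ∈ q, g a i = r q := by
    intro i hi q hq a ha
    have h : ∃ q ∈ Q i, a ∈ q := ⟨q, hq, ha⟩
    have e : h.choose = q := by
      by_contra hne
      have hdis := (hQ i hi).1.2.1 _ h.choose_spec.1 q hq hne
      exact Set.notMem_empty a (hdis ▸ ⟨h.choose_spec.2, ha⟩)
    simp only [g, dif_pos h, e]
  rcases harrow (fun a b => if LexLT σ (g b) (g a) then 1 else 0) A hA with
    ⟨B, hB, hBA, hB2⟩ | ⟨c, -, -, hc⟩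
  swap
  · exfalso
    refine no_lex_decreasing hσ (fun i => g (c i)) (fun i j hij hj => ?_)
    by_contra hn
    simpa [hn] using hc i j hij hj
  have key : ∀ i, i < σ.ord → ∃ q ∈ Q i, B \ q ∈ J := by
    intro i
    induction i using WellFoundedLT.induction with
    | ind i ih =>
      intro hi
      have ih' : ∀ j, ∃ q, j < i → q ∈ Q j ∧ B \ q ∈ J := by
        intro j
        by_cases hj : j < i
        · obtain ⟨q, hq⟩ := ih j hj (hj.trans hi)
          exact ⟨q, fun _ => hq⟩
        · exact ⟨∅, fun h => absurd h hj⟩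
      choose q hq using ih'
      -- the null set of elements of `B` missing some piece already selected
      obtain ⟨N, hNdef⟩ : ∃ N, N = ⋃ j ∈ Iio i, B \ q j := ⟨_, rfl⟩
      have hN : N ∈ J := hNdef ▸ iUnion_Iio_mem hcomp
        (hi.trans (Cardinal.ord_lt_ord.2 hσκ)) (fun j => B \ q j) (fun j hj => (hq j hj).2)
      have hmem : ∀ b ∈ B \ N, ∀ j < i, b ∈ q j := by
        intro b hb j hj
        by_contra hbj
        exact hb.2 (hNdef ▸ Set.mem_biUnion (x := j) hj ⟨hb.1, hbj⟩)
      have hpos : ∀ S, S ∈ J → B \ N ⊆ S → False := fun S hS hsub =>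
        hB.2 (hJ.mem_of_subset _ (hJ.union_mem _ hS _ hN) B fun b hb => by
          by_cases hbN : b ∈ N
          · exact Or.inr hbN
          · exact Or.inl (hsub ⟨hb, hbN⟩))
      -- two pieces cannot both meet `B \ N` in a positive set
      have huniq : ∀ q₁ ∈ Q i, ∀ q₂ ∈ Q i, q₁ ∩ (B \ N) ∉ J → q₂ ∩ (B \ N) ∉ J →
          ¬ r q₁ < r q₂ := by
        intro q₁ hq₁ q₂ hq₂ h₁ h₂ hlt
        obtain ⟨a, haq, haB⟩ : (q₂ ∩ (B \ N)).Nonempty :=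
          Set.nonempty_iff_ne_empty.2 (fun h => h₂ (h ▸ hJ.empty_mem))
        refine h₁ (hJ.mem_of_subset _ (hB2 a haB.1) _ ?_)
        rintro b ⟨hbq, hbB⟩
        have hlex : LexLT σ (g b) (g a) := by
          refine ⟨i, hi, fun j hj => ?_, ?_⟩
          · rw [hg j (hj.trans hi) _ (hq j hj).1 b (hmem b hbB j hj),
              hg j (hj.trans hi) _ (hq j hj).1 a (hmem a haB j hj)]
          · rwa [hg i hi q₁ hq₁ b hbq, hg i hi q₂ hq₂ a haq]
        exact ⟨hbB.1, by simp [hlex]⟩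
      obtain ⟨p, hp, hpB⟩ := (hQ i hi).1.2.2 (B \ N)
        ⟨Set.sdiff_subset.trans hB.1, fun h => hpos _ h subset_rfl⟩
      refine ⟨p, hp, ?_⟩
      by_contra hnot
      have hCp : (B \ N) \ p ∉ J := fun h => hnot
        (hJ.mem_of_subset _ (hJ.union_mem _ h _ hN) _ fun b hb => by
          by_cases hbN : b ∈ N
          · exact Or.inr hbN
          · exact Or.inl ⟨⟨hb.1, hbN⟩, hb.2⟩)
      obtain ⟨p', hp', hpB'⟩ := (hQ i hi).1.2.2 ((B \ N) \ p)
        ⟨(Set.sdiff_subset.trans Set.sdiff_subset).trans hB.1, hCp⟩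
      have hne : p ≠ p' := by
        rintro rfl
        refine hpB' ?_
        rw [Set.inter_sdiff_self]
        exact hJ.empty_mem
      have hpB'' : p' ∩ (B \ N) ∉ J := fun h =>
        hpB' (hJ.mem_of_subset _ h _ (Set.inter_subset_inter_right _ Set.sdiff_subset))
      rcases lt_or_gt_of_ne (hr.ne hne) with h | h
      · exact huniq p hp p' hp' hpB hpB'' h
      · exact huniq p' hp' p hp hpB'' hpB h
  have key' : ∀ i, ∃ q, i < σ.ord → q ∈ Q i ∧ B \ q ∈ J := by
    intro i
    by_cases hi : i < σ.ord
    · obtain ⟨q, hq⟩ := key i hi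
      exact ⟨q, fun _ => hq⟩
    · exact ⟨∅, fun h => absurd h hi⟩
  choose h hh using key'
  exact ⟨B, hB, hBA, h, fun i hi => (hh i hi).1, fun i hi => (hh i hi).2⟩
end
end

section
/- Let κ be a regular uncountable cardinal, λ ≥ κ, and J a κ-complete fine ideal on P_κ(λ). Suppose that {P_κ(λ)} →_κ^J (J^+, κ)² holds. Then κ has the partition property κ → (κ)²₂ (for every f : κ × κ → 2 there are H ⊆ κ of cardinality κ and i < 2 with f(α,β) = i for all α < β in H); that is, κ is weakly compact. -/
/-!
Given `f`, colour `(α, b)` with `1` exactly when `α < sup (b ∩ κ)` and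
`f α (sup (b ∩ κ)) = 1`, and apply the partition relation to `P_κ(λ)`.

A `κ`-sequence `c` homogeneous for colour `1` has strictly increasing suprema
`sup (c i ∩ κ)`, and these form a set homogeneous for `f` with colour `1`.

Otherwise there is a positive set `B` such that, for each `a ∈ B`, almost all `b ∈ B` get colour
`0` with `sup (a ∩ κ)`. By fineness almost all `b` also satisfy `sup (a ∩ κ) < sup (b ∩ κ)`
(`supk_le_mem`), so that `f (sup (a ∩ κ)) (sup (b ∩ κ)) = 0`. By `κ`-completeness this can be
achieved simultaneously for fewer than `κ` many `a`, so a recursion of length `κ`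
(`exists_seq_of_bounded`) yields a set of suprema homogeneous for `f` with colour `0`.
-/

set_option autoImplicit false

noncomputable section

open Cardinal Set

universe u

/-- `sup (a ∩ κ) < κ` for `a ∈ P_κ(λ)`, by regularity of `κ`. -/
theorem supk_lt_ord {κ lam : Cardinal.{0}} (hreg : κ.IsRegular) {a : Set Ordinal.{0}}
    (ha : a ∈ Pkl κ lam) : supk κ a < κ.ord := by
  refine Ordinal.sSup_lt_of_lt_cof ?_ fun x hx => hx.2
  rw [← Ordinal.lift_cof, hreg.cof_ord]
  exact (mk_le_mk_of_subset inter_subset_left).trans_lt ha.2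

/-- For fine `J` and `γ < κ`, the set of `b` with `sup (b ∩ κ) ≤ γ` is null: no such `b`
contains the point `γ + 1`. -/
theorem supk_le_mem {κ lam : Cardinal.{0}} (hunc : ℵ₀ < κ) (hkl : κ ≤ lam)
    {J : Set (Set (Set Ordinal.{0}))} (hfine : Ikl κ lam ⊆ J) {γ : Ordinal.{0}}
    (hγ : γ < κ.ord) : {b | b ∈ Pkl κ lam ∧ supk κ b ≤ γ} ∈ J := by
  have hγ' : Order.succ γ < κ.ord := (isSuccLimit_ord hunc.le).succ_lt hγ
  refine hfine ⟨fun b hb => hb.1, {Order.succ γ}, ⟨?_, ?_⟩, ?_⟩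
  · rintro x rfl
    exact hγ'.trans_le (ord_le_ord.2 hkl)
  · rw [mk_singleton, ← lift_one.{0, 1}, lift_lt]
    exact one_lt_aleph0.trans hunc
  · rintro b ⟨-, hb⟩ hsub
    have hmem : Order.succ γ ∈ b ∩ Iio κ.ord := ⟨hsub rfl, hγ'⟩
    have hle : Order.succ γ ≤ supk κ b :=
      le_csSup ⟨κ.ord, fun x hx => (mem_Iio.1 hx.2).le⟩ hmem
    exact (Order.lt_succ γ).not_ge (hle.trans hb)

/-- Transfinite recursion of length `κ`: if every subset of `B` of size `< κ` has an
`R`-upper bound in `B`, then `B` contains an `R`-increasing `κ`-sequence. -/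
theorem exists_seq_of_bounded {β : Type 1} [Inhabited β] (κ : Cardinal.{0}) (B : Set β)
    (R : β → β → Prop)
    (h : ∀ S ⊆ B, #S < Cardinal.lift.{1} κ → ∃ b ∈ B, ∀ a ∈ S, R a b) :
    ∃ c : Ordinal.{0} → β, (∀ i, i < κ.ord → c i ∈ B) ∧
      ∀ i j, i < j → j < κ.ord → R (c i) (c j) := by
  choose! pick hpick using h
  -- The `i`-th term is the chosen bound of the set of earlier terms.
  let c : Ordinal.{0} → β := WellFoundedLT.fix fun i ih => pick {x | ∃ j, ∃ hj : j < i, x = ih j hj}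
  have hc : ∀ i, c i = pick (c '' Iio i) := fun i => by
    have h1 : c i = pick {x | ∃ j, ∃ _ : j < i, x = c j} := WellFoundedLT.fix_eq _ i
    rw [h1]
    congr 1
    ext x
    simp [eq_comm]
  have hcard : ∀ i < κ.ord, #(c '' Iio i) < Cardinal.lift.{1} κ := fun i hi => by
    refine mk_image_le.trans_lt ?_
    rw [mk_Iio_ordinal, lift_lt]
    exact lt_ord.1 hi
  have hmem : ∀ i, i < κ.ord → c i ∈ B := fun i => by
    induction i using WellFoundedLT.induction with
    | ind i ih =>
      intro hi
      rw [hc i]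
      refine (hpick _ ?_ (hcard i hi)).1
      rintro _ ⟨j, hj, rfl⟩
      exact ih j hj (lt_trans hj hi)
  refine ⟨c, hmem, fun i j hij hj => ?_⟩
  have hsub : c '' Iio j ⊆ B := by
    rintro _ ⟨k, hk, rfl⟩
    exact hmem k (lt_trans hk hj)
  rw [hc j]
  exact (hpick _ hsub (hcard j hj)).2 _ ⟨i, hij, rfl⟩

/-- The range of a strictly increasing homogeneous `κ`-sequence is a homogeneous set of
size `κ`. -/
theorem exists_homogeneous_of_seq (κ : Cardinal.{0}) (f : Ordinal.{0} → Ordinal.{0} → Fin 2)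
    (n : Fin 2) (s : Ordinal.{0} → Ordinal.{0}) (hs : ∀ i, i < κ.ord → s i < κ.ord)
    (hlt : ∀ i j, i < j → j < κ.ord → s i < s j)
    (hf : ∀ i j, i < j → j < κ.ord → f (s i) (s j) = n) :
    ∃ H : Set Ordinal.{0}, H ⊆ Set.Iio κ.ord ∧ #H = Cardinal.lift.{1} κ ∧
      ∃ i : Fin 2, ∀ α ∈ H, ∀ β ∈ H, α < β → f α β = i := by
  have hmono : StrictMonoOn s (Iio κ.ord) := fun i _ j hj hij => hlt i j hij hj
  refine ⟨s '' Iio κ.ord, ?_, ?_, n, ?_⟩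
  · rintro _ ⟨i, hi, rfl⟩
    exact hs i hi
  · rw [mk_image_eq_of_injOn s _ hmono.injOn, mk_Iio_ordinal, card_ord]
  · rintro _ ⟨i, hi, rfl⟩ _ ⟨j, hj, rfl⟩ hij
    exact hf i j ((hmono.lt_iff_lt hi hj).1 hij) hj

/-- if `J` is a `κ`-complete fine ideal on `P_κ(λ)` and
`{P_κ(λ)} →_κ^J (J⁺, κ)²` holds, then `κ → (κ)²₂`, i.e. `κ` is weakly
compact. -/
theorem stmt14 (κ lam : Cardinal.{0}) (hreg : κ.IsRegular) (hunc : ℵ₀ < κ)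
    (hkl : κ ≤ lam)
    (J : Set (Set (Set Ordinal.{0}))) (hJ : IsIdealOn J (Pkl κ lam))
    (hcomp : KappaComplete κ J) (hfine : Ikl κ lam ⊆ J)
    (harrow : ArrowKappaPair κ lam J {Pkl κ lam} κ) :
    ∀ f : Ordinal.{0} → Ordinal.{0} → Fin 2,
      ∃ H : Set Ordinal.{0}, H ⊆ Set.Iio κ.ord ∧ #H = Cardinal.lift.{1} κ ∧
        ∃ i : Fin 2, ∀ α ∈ H, ∀ β ∈ H, α < β → f α β = i := by
  classical
  intro f
  rcases harrow (fun α b => if α < supk κ b ∧ f α (supk κ b) = 1 then 1 else 0)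
    (Pkl κ lam) rfl with ⟨B, ⟨hBX, hBJ⟩, -, hB⟩ | ⟨c, hcX, -, hc⟩
  · -- Fewer than `κ` null sets cannot cover `B`, so every small `S ⊆ B` can be extended.
    obtain ⟨c, hcB, hcR⟩ := exists_seq_of_bounded κ B
        (fun a b => supk κ a < supk κ b ∧ f (supk κ a) (supk κ b) = 0) (by
      intro S hSB hS
      by_contra! hcon
      let bad : Set Ordinal.{0} → Set (Set Ordinal.{0}) := fun a =>
        {b | b ∈ B ∧ (supk κ a < supk κ b → f (supk κ a) (supk κ b) ≠ 0)}
      have hbad : ∀ a ∈ S, bad a ∈ J := fun a ha => by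
        refine hJ.mem_of_subset _ (hJ.union_mem _ (hB a (hSB ha)) _
          (supk_le_mem hunc hkl hfine (supk_lt_ord hreg (hBX (hSB ha))))) _ ?_
        rintro b ⟨hbB, hb⟩
        by_cases hlt : supk κ a < supk κ b
        · have h1 : f (supk κ a) (supk κ b) = 1 := by
            have := hb hlt
            omega
          exact Or.inl ⟨hbB, by simp [hlt, h1]⟩
        · exact Or.inr ⟨hBX hbB, not_lt.1 hlt⟩
      refine hBJ (hJ.mem_of_subset _ (hcomp (bad '' S) ?_ (mk_image_le.trans_lt hS)) _ ?_)
      · rintro _ ⟨a, ha, rfl⟩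
        exact hbad a ha
      · intro b hb
        obtain ⟨a, ha, hab⟩ := hcon b hb
        exact ⟨bad a, ⟨a, ha, rfl⟩, hb, hab⟩)
    exact exists_homogeneous_of_seq κ f 0 (fun i => supk κ (c i))
      (fun i hi => supk_lt_ord hreg (hBX (hcB i hi)))
      (fun i j hij hj => (hcR i j hij hj).1) (fun i j hij hj => (hcR i j hij hj).2)
  · have key : ∀ i j, i < j → j < κ.ord →
        supk κ (c i) < supk κ (c j) ∧ f (supk κ (c i)) (supk κ (c j)) = 1 :=
      fun i j hij hj => by
        by_contra hn
        have := hc i j hij hj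
        simp [hn] at this
    exact exists_homogeneous_of_seq κ f 1 (fun i => supk κ (c i))
      (fun i hi => supk_lt_ord hreg (hcX i hi))
      (fun i j hij hj => (key i j hij hj).1) (fun i j hij hj => (key i j hij hj).2)
end
end

section
/- Let κ be a regular uncountable cardinal, λ ≥ κ, and J an ideal on P_κ(λ) that is both a weak π-point and a weak χ-point. Suppose that J^+ →_κ^J (J^+, κ)² holds. Then (J↾κ)^+ → ((J↾κ)^+, κ)² holds. -/
/-!
Given a colouring `f` of pairs from `κ` and a `(J ↾ κ)`-positive set `A`, the partition hypothesis
is applied to the set `{a : sup (a ∩ κ) ∈ A}` and the colouring `F α b` which is `1` exactly when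
`α < sup (b ∩ κ)` and `f α (sup (b ∩ κ)) = 1`.

A `1`-homogeneous chain `c` for `F` gives the `1`-homogeneous sequence `i ↦ sup (c i ∩ κ)` for `f`,
which is strictly increasing by the choice of `F`. Otherwise there is a `J`-positive `B` such that
the set of `b ∈ B` with `F (sup (a ∩ κ)) b = 1` lies in `J` for every `a ∈ B`. The weak `π`-point
property shrinks `B` so that these exceptional sets become noncofinal, each missing the supersets
of some `g (sup (a ∩ κ))`. The weak `χ`-point property, applied to `g`, shrinks `B` again so that
no exceptional pair is left. The image of the resulting set under `a ↦ sup (a ∩ κ)` is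
`(J ↾ κ)`-positive and `0`-homogeneous for `f`.
-/

set_option autoImplicit false

noncomputable section

open Cardinal Set

universe u

/-- if `J` is a weak `π`-point and a weak `χ`-point and
`J⁺ →_κ^J (J⁺, κ)²` holds, then `(J ↾ κ)⁺ → ((J ↾ κ)⁺, κ)²` holds. -/
theorem stmt15 (κ lam : Cardinal.{0}) (hreg : κ.IsRegular) (hunc : ℵ₀ < κ)
    (hkl : κ ≤ lam)
    (J : Set (Set (Set Ordinal.{0}))) (hJ : IsIdealOn J (Pkl κ lam))
    (hπ : WeakPiPoint κ lam J) (hχ : WeakChiPoint κ lam J)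
    (harrow : ArrowKappaPair κ lam J (plusOf J (Pkl κ lam)) κ) :
    ∀ f : Ordinal.{0} → Ordinal.{0} → Fin 2,
      ∀ A ∈ plusOf (restrK κ lam J) (Set.Iio κ.ord),
        (∃ B ∈ plusOf (restrK κ lam J) (Set.Iio κ.ord), B ⊆ A ∧
          ∀ α ∈ B, ∀ β ∈ B, α < β → f α β = 0) ∨
        (∃ g : Ordinal.{0} → Ordinal.{0}, (∀ i, i < κ.ord → g i ∈ A) ∧
          (∀ i j, i < j → j < κ.ord → g i < g j) ∧
          ∀ i j, i < j → j < κ.ord → f (g i) (g j) = 1) := by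
  classical
  intro f A hA
  obtain ⟨hAκ, hAJ⟩ := hA
  have hpos : {a | a ∈ Pkl κ lam ∧ supk κ a ∈ A} ∈ plusOf J (Pkl κ lam) :=
    ⟨fun a ha => ha.1, fun h => hAJ ⟨hAκ, h⟩⟩
  let F : Ordinal.{0} → Set Ordinal.{0} → Fin 2 := fun α b =>
    if α < supk κ b ∧ f α (supk κ b) = 1 then 1 else 0
  rcases harrow F _ hpos with ⟨B, hB, hBA, hBF⟩ | ⟨c, hcA, -, hcF⟩
  · left
    -- The exceptional set of `α`, replaced by `∅` when it is `J`-positive; the latter never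
    -- happens for `α = sup (a ∩ κ)` with `a ∈ B`.
    let h : Ordinal.{0} → Set (Set Ordinal.{0}) := fun α =>
      if {b | b ∈ B ∧ F α b ≠ 0} ∈ J then {b | b ∈ B ∧ F α b ≠ 0} else ∅
    have hhJ : ∀ α, α < κ.ord → h α ∈ J := by
      intro α _
      by_cases hα : {b | b ∈ B ∧ F α b ≠ 0} ∈ J
      · simpa only [h, if_pos hα] using hα
      · simpa only [h, if_neg hα] using hJ.empty_mem
    obtain ⟨C, hC, hCB, hCI⟩ := hπ B hB h hhJ
    choose! g hgP hg using fun α hα => (hCI α hα).2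
    obtain ⟨D, hD, hDC, hDg⟩ := hχ C hC g hgP
    have hDA : ∀ a ∈ D, supk κ a ∈ A := fun a ha => (hBA (hCB (hDC ha))).2
    refine ⟨supk κ '' D, ⟨?_, ?_⟩, ?_, ?_⟩
    · rintro _ ⟨a, ha, rfl⟩
      exact hAκ (hDA a ha)
    · rintro ⟨-, hm⟩
      exact hD.2 (hJ.mem_of_subset _ hm D fun a ha => ⟨hD.1 ha, a, ha, rfl⟩)
    · rintro _ ⟨a, ha, rfl⟩
      exact hDA a ha
    · rintro _ ⟨a, ha, rfl⟩ _ ⟨b, hb, rfl⟩ hab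
      by_contra hne
      have hone : f (supk κ a) (supk κ b) = 1 := by omega
      have hFab : F (supk κ a) b ≠ 0 := by
        simp only [F, if_pos (And.intro hab hone)]
        exact one_ne_zero
      have hbh : b ∈ h (supk κ a) := by
        simp only [h, if_pos (hBF a (hCB (hDC ha)))]
        exact ⟨hCB (hDC hb), hFab⟩
      exact hg _ (hAκ (hDA a ha)) b ⟨hDC hb, hbh⟩ (hDg a ha b hb hab)
  · right
    have key : ∀ i j, i < j → j < κ.ord →
        supk κ (c i) < supk κ (c j) ∧ f (supk κ (c i)) (supk κ (c j)) = 1 := by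
      intro i j hij hj
      by_contra hn
      have h01 := hcF i j hij hj
      simp only [F, if_neg hn] at h01
      exact zero_ne_one h01
    exact ⟨fun i => supk κ (c i), fun i hi => (hcA i hi).2,
      fun i j hij hj => (key i j hij hj).1, fun i j hij hj => (key i j hij hj).2⟩
end
end

section
/- Let κ be a regular uncountable cardinal, λ ≥ κ, ρ an infinite cardinal, and J a fine ideal on P_κ(λ). Suppose that {P_κ(λ)} →_J (J^+)²_ρ holds. Then PS^+(ρ^+, κ, ν) holds for every cardinal ν with κ ≤ ν ≤ λ. -/
/-!
Colour a pair `(a, b)` from `P_κ(λ)` by the index (below `ρ`) of the piece of `Q_{a ∩ ν}` that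
contains `b ∩ ν`. A `J`-homogeneous set `B` of colour `i` yields the selector `h`: on `a' ∈ P_κ(ν)`
it picks the piece of `Q_{a'}` with index `i` whenever there is one. For `a, b ∈ B`, positivity of
`B` and fineness of `J` give some `c ∈ B` outside `Z_a ∪ Z_b` with `a ∪ b ⊆ c`, and `c ∩ ν` is then
a common element of `h (a ∩ ν)` and `h (b ∩ ν)`. The trace `{a ∩ ν : a ∈ B}` is cofinal in
`P_κ(ν)`, again by fineness.
-/

set_option autoImplicit false

noncomputable section

open Cardinal Set

universe u

/-- Traces on `ν` of members of `P_κ(λ)` belong to `P_κ(ν)`. -/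
lemma Pkl_trace {κ lam ν : Cardinal.{0}} {a : Set Ordinal.{0}} (ha : a ∈ Pkl κ lam) :
    a ∩ Set.Iio ν.ord ∈ Pkl κ ν :=
  ⟨Set.inter_subset_right, (Cardinal.mk_le_mk_of_subset Set.inter_subset_left).trans_lt ha.2⟩

lemma Pkl_union {κ lam : Cardinal.{0}} (hκ : ℵ₀ ≤ κ) {a b : Set Ordinal.{0}}
    (ha : a ∈ Pkl κ lam) (hb : b ∈ Pkl κ lam) : a ∪ b ∈ Pkl κ lam :=
  ⟨Set.union_subset ha.1 hb.1, (Cardinal.mk_union_le a b).trans_lt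
    (Cardinal.add_lt_of_lt (by simpa using hκ) ha.2 hb.2)⟩

lemma Pkl_mono {κ ν lam : Cardinal.{0}} (h : ν ≤ lam) : Pkl κ ν ⊆ Pkl κ lam :=
  fun _ ha => ⟨fun _ hx => lt_of_lt_of_le (ha.1 hx) (Cardinal.ord_le_ord.2 h), ha.2⟩

/-- Removing a null set from a `J`-positive set leaves a cofinal set, by fineness of `J`. -/
lemma exists_superset_notMem {κ lam : Cardinal.{0}} {J : Set (Set (Set Ordinal.{0}))}
    (hJ : IsIdealOn J (Pkl κ lam)) (hfine : Ikl κ lam ⊆ J) {B Z : Set (Set Ordinal.{0})}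
    (hB : B ∈ plusOf J (Pkl κ lam)) (hZ : Z ∈ J) {x : Set Ordinal.{0}} (hx : x ∈ Pkl κ lam) :
    ∃ c ∈ B, c ∉ Z ∧ x ⊆ c := by
  by_contra! hcon
  refine hB.2 (hJ.mem_of_subset _ (hJ.union_mem Z hZ (B \ Z) (hfine ?_)) B ?_)
  · exact ⟨fun c hc => hB.1 hc.1, x, hx, fun c hc => hcon c hc.1 hc.2⟩
  · exact fun c hc => or_iff_not_imp_left.2 fun h => ⟨hc, h⟩

/-- A family of at most `ρ` many sets can be indexed injectively by ordinals below `ρ`. -/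
lemma exists_index {ρ : Cardinal.{0}} (hρ : ℵ₀ ≤ ρ) (Q : Set (Set (Set Ordinal.{0})))
    (hQ : #Q < Cardinal.lift.{1} (Order.succ ρ)) :
    ∃ e : Set (Set Ordinal.{0}) → Ordinal.{0}, (∀ q, e q < ρ.ord) ∧ Set.InjOn e Q := by
  classical
  have hle : #Q ≤ #(Set.Iio ρ.ord) := by
    rw [Cardinal.lift_succ, Order.lt_succ_iff] at hQ
    simpa using hQ
  obtain ⟨f⟩ := (Cardinal.le_def _ _).1 hle
  have hpos : (0 : Ordinal.{0}) < ρ.ord :=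
    Cardinal.ord_pos.2 (Cardinal.aleph0_pos.trans_le hρ)
  refine ⟨fun q => if h : q ∈ Q then (f ⟨q, h⟩ : Ordinal) else 0, fun q => ?_, ?_⟩
  · by_cases h : q ∈ Q
    · simp only [h, dif_pos]
      exact (f ⟨q, h⟩).2
    · simpa [h] using hpos
  · intro p hp q hq hpq
    simp only [hp, hq, dif_pos] at hpq
    exact congrArg Subtype.val (f.injective (Subtype.ext hpq))

/-- if `J` is a fine ideal on `P_κ(λ)`, `ρ` is infinite and
`{P_κ(λ)} →_J (J⁺)²_ρ` holds, then `PS⁺(ρ⁺, κ, ν)` holds for every cardinal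
`ν` with `κ ≤ ν ≤ λ`. -/
theorem stmt16 (κ lam ρ : Cardinal.{0}) (hreg : κ.IsRegular) (hunc : ℵ₀ < κ)
    (hkl : κ ≤ lam) (hρ : ℵ₀ ≤ ρ)
    (J : Set (Set (Set Ordinal.{0}))) (hJ : IsIdealOn J (Pkl κ lam))
    (hfine : Ikl κ lam ⊆ J)
    (harrow : BalArrowAll κ lam J ρ) :
    ∀ ν : Cardinal.{0}, κ ≤ ν → ν ≤ lam → PSPlus (Order.succ ρ) κ ν := by
  classical
  intro ν hκν hνl Q hQ
  have hidx : ∀ a, ∃ e : Set (Set Ordinal.{0}) → Ordinal.{0},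
      (∀ q, e q < ρ.ord) ∧ (a ∈ Pkl κ ν → Set.InjOn e (Q a)) := by
    intro a
    by_cases ha : a ∈ Pkl κ ν
    · obtain ⟨e, he, hi⟩ := exists_index hρ (Q a) (hQ a ha).2
      exact ⟨e, he, fun _ => hi⟩
    · obtain ⟨e, he, -⟩ := exists_index hρ ∅ (by simp)
      exact ⟨e, he, fun h => absurd h ha⟩
  choose e he hinj using hidx
  have hpiece : ∀ a c, ∃ q, a ∈ Pkl κ ν → c ∈ Pkl κ ν → q ∈ Q a ∧ c ∈ q := by
    intro a c
    by_cases h : a ∈ Pkl κ ν ∧ c ∈ Pkl κ ν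
    · have hc := h.2
      rw [← (hQ a h.1).1.2.2.2] at hc
      obtain ⟨q, hq, hcq⟩ := hc
      exact ⟨q, fun _ _ => ⟨hq, hcq⟩⟩
    · exact ⟨∅, fun h1 h2 => absurd ⟨h1, h2⟩ h⟩
  choose piece hpc using hpiece
  obtain ⟨i, -, B, hB, Z, hZ, hF⟩ := harrow
    (fun a b => e (a ∩ Set.Iio ν.ord) (piece (a ∩ Set.Iio ν.ord) (b ∩ Set.Iio ν.ord)))
    (fun a b => he _ _)
  -- The piece of index `i` when there is one; otherwise any piece, such as that of `a` itself.
  have hsel : ∀ a, ∃ q, a ∈ Pkl κ ν → q ∈ Q a ∧ ∀ p ∈ Q a, e a p = i → p = q := by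
    intro a
    by_cases h : ∃ p ∈ Q a, e a p = i
    · obtain ⟨p, hp, hpi⟩ := h
      exact ⟨p, fun ha => ⟨hp, fun p' hp' hpi' => hinj a ha hp' hp (hpi'.trans hpi.symm)⟩⟩
    · exact ⟨piece a a, fun ha => ⟨(hpc a a ha ha).1, fun p hp hpi => absurd ⟨p, hp, hpi⟩ h⟩⟩
  choose h hh using hsel
  have hmem : ∀ a ∈ B, ∀ c ∈ B, c ∉ Z a →
      c ∩ Set.Iio ν.ord ∈ h (a ∩ Set.Iio ν.ord) := by
    intro a ha c hc hcZ
    have ha' : a ∩ Set.Iio ν.ord ∈ Pkl κ ν := Pkl_trace (hB.1 ha)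
    obtain ⟨h1, h2⟩ := hpc _ _ ha' (Pkl_trace (hB.1 hc) : c ∩ Set.Iio ν.ord ∈ Pkl κ ν)
    rw [← (hh _ ha').2 _ h1 (hF a ha c hc hcZ)]
    exact h2
  refine ⟨(fun a => a ∩ Set.Iio ν.ord) '' B, ⟨?_, ?_⟩, h, fun a ha => (hh a ha).1, ?_⟩
  · rintro _ ⟨a, ha, rfl⟩
    exact Pkl_trace (hB.1 ha)
  · rintro ⟨-, x, hx, hxB⟩
    obtain ⟨c, hc, -, hxc⟩ :=
      exists_superset_notMem hJ hfine hB hJ.empty_mem (Pkl_mono hνl hx)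
    exact hxB _ ⟨c, hc, rfl⟩ (Set.subset_inter hxc hx.1)
  · rintro _ ⟨a, ha, rfl⟩ _ ⟨b, hb, rfl⟩
    obtain ⟨c, hc, hcZ, habc⟩ := exists_superset_notMem hJ hfine hB
      (hJ.union_mem _ (hZ a ha) _ (hZ b hb)) (Pkl_union hunc.le (hB.1 ha) (hB.1 hb))
    refine ⟨c ∩ Set.Iio ν.ord, hmem a ha c hc fun hz => hcZ (Or.inl hz),
      hmem b hb c hc fun hz => hcZ (Or.inr hz), ?_⟩
    rw [← Set.union_inter_distrib_right]
    exact Set.inter_subset_inter_left _ habc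
end
end
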